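/- In the calculus λ_S, the β_Ω axiom is validated by applicative bisimilarity: for every pure evaluation context E with x not free in E and every term t such that both sides are closed, (λx.E[x]) t ≈_app E[t]. -/

import Mathlib

namespace LambdaS

/-- Terms of the calculus λ_S: variables, λ-abstractions, applications,
the shift operator `S k.t`, and the reset delimiter `⟨t⟩`. -/
inductive Tm : Type
  | var : ℕ → Tm
  | lam : ℕ → Tm → Tm
  | app : Tm → Tm → Tm
  | shift : ℕ → Tm → Tm
  | reset : Tm → Tm
  deriving DecidableEq

/-- A variable fresh for a finite set of variables. -/
def fresh (s : Finset ℕ) : ℕ := if h : s.Nonempty then s.max' h + 1 else 0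

namespace Tm

/-- Free variables. -/
def fv : Tm → Finset ℕ
  | var x => {x}
  | lam x t => fv t \ {x}
  | app t u => fv t ∪ fv u
  | shift k t => fv t \ {k}
  | reset t => fv t

def size : Tm → ℕ
  | var _ => 1
  | lam _ t => size t + 1
  | app t u => size t + size u + 1
  | shift _ t => size t + 1
  | reset t => size t + 1

/-- Renaming of free occurrences of a variable (used for α-renaming with a
fresh target variable). -/
def rename : Tm → ℕ → ℕ → Tm
  | var w, y, z => if w = y then var z else var w
  | lam w t, y, z => if w = y then lam w t else lam w (rename t y z)
  | app t u, y, z => app (rename t y z) (rename u y z)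
  | shift w t, y, z => if w = y then shift w t else shift w (rename t y z)
  | reset t, y, z => reset (rename t y z)

theorem size_rename (t : Tm) (y z : ℕ) : size (rename t y z) = size t := by
  induction t generalizing y z with
  | var w => simp only [rename]; split <;> rfl
  | lam w t ih => simp only [rename]; split <;> simp [size, ih]
  | app t u iht ihu => simp [rename, size, iht, ihu]
  | shift w t ih => simp only [rename]; split <;> simp [size, ih]
  | reset t ih => simp [rename, size, ih]

/-- Capture-avoiding substitution `t{v/x}` of `v` for the free occurrences of
`x` in `t`; bound variables are α-renamed when needed. -/
def subst : Tm → ℕ → Tm → Tm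
  | var w, x, v => if w = x then v else var w
  | lam y t, x, v =>
      if y = x then lam y t
      else if y ∈ fv v then
        lam (fresh (fv v ∪ fv t ∪ {x}))
          (subst (rename t y (fresh (fv v ∪ fv t ∪ {x}))) x v)
      else lam y (subst t x v)
  | app t u, x, v => app (subst t x v) (subst u x v)
  | shift y t, x, v =>
      if y = x then shift y t
      else if y ∈ fv v then
        shift (fresh (fv v ∪ fv t ∪ {x}))
          (subst (rename t y (fresh (fv v ∪ fv t ∪ {x}))) x v)
      else shift y (subst t x v)
  | reset t, x, v => reset (subst t x v)
termination_by t _ _ => size t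
decreasing_by all_goals simp [size_rename, size] <;> omega

end Tm

/-- Values: variables and λ-abstractions. -/
inductive IsValue : Tm → Prop
  | var (x : ℕ) : IsValue (Tm.var x)
  | lam (x : ℕ) (t : Tm) : IsValue (Tm.lam x t)

/-- A term is closed if it has no free variables. -/
def Closed (t : Tm) : Prop := t.fv = ∅

/-- Pure evaluation contexts E ::= □ | v E | E t. -/
inductive ECtx : Type
  | hole : ECtx
  | appR : (v : Tm) → IsValue v → ECtx → ECtx
  | appL : ECtx → Tm → ECtx

def ECtx.plug : ECtx → Tm → Tm
  | .hole, t => t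
  | .appR v _ E, t => Tm.app v (E.plug t)
  | .appL E u, t => Tm.app (E.plug t) u

def ECtx.fv : ECtx → Finset ℕ
  | .hole => ∅
  | .appR v _ E => v.fv ∪ E.fv
  | .appL E u => E.fv ∪ u.fv

/-- Composition of pure contexts: `(E.comp E').plug t = E.plug (E'.plug t)`. -/
def ECtx.comp : ECtx → ECtx → ECtx
  | .hole, E' => E'
  | .appR v hv E, E' => .appR v hv (E.comp E')
  | .appL E u, E' => .appL (E.comp E') u

/-- Evaluation contexts F ::= □ | v F | F t | ⟨F⟩. -/
inductive FCtx : Type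
  | hole : FCtx
  | appR : (v : Tm) → IsValue v → FCtx → FCtx
  | appL : FCtx → Tm → FCtx
  | reset : FCtx → FCtx

def FCtx.plug : FCtx → Tm → Tm
  | .hole, t => t
  | .appR v _ F, t => Tm.app v (F.plug t)
  | .appL F u, t => Tm.app (F.plug t) u
  | .reset F, t => Tm.reset (F.plug t)

def FCtx.fv : FCtx → Finset ℕ
  | .hole => ∅
  | .appR v _ F => v.fv ∪ F.fv
  | .appL F u => F.fv ∪ u.fv
  | .reset F => F.fv

/-- The function `λx.⟨E[x]⟩` representing the captured delimited context `E`,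
where `x` is chosen fresh (in particular `x ∉ fv E`). -/
def contFun (E : ECtx) : Tm :=
  Tm.lam (fresh E.fv) (Tm.reset (E.plug (Tm.var (fresh E.fv))))

/-- Call-by-value reduction →_v of λ_S. -/
inductive Red : Tm → Tm → Prop
  | beta (F : FCtx) (x : ℕ) (t v : Tm) :
      IsValue v →
      Red (F.plug (Tm.app (Tm.lam x t) v)) (F.plug (t.subst x v))
  | capture (F : FCtx) (E : ECtx) (k : ℕ) (t : Tm) :
      Red (F.plug (Tm.reset (E.plug (Tm.shift k t))))
          (F.plug (Tm.reset (t.subst k (contFun E))))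
  | resetVal (F : FCtx) (v : Tm) :
      IsValue v →
      Red (F.plug (Tm.reset v)) (F.plug v)

/-- A stuck term: not a value and unable to reduce. -/
def Stuck (t : Tm) : Prop := ¬ IsValue t ∧ ∀ t', ¬ Red t t'

/-- Normal forms: values and stuck terms. -/
def NormalForm (t : Tm) : Prop := IsValue t ∨ Stuck t

/-- A control-stuck term has the form E[S k.t]. -/
def ControlStuck (t : Tm) : Prop :=
  ∃ (E : ECtx) (k : ℕ) (s : Tm), t = E.plug (Tm.shift k s)

/-- Evaluation: `t ⇓ t'` iff `t →_v* t'` and `t'` is a normal form. -/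
def Evals (t t' : Tm) : Prop := Relation.ReflTransGen Red t t' ∧ NormalForm t'

/-- `t` evaluates to some value. -/
def EvalsToValue (t : Tm) : Prop := ∃ v, Relation.ReflTransGen Red t v ∧ IsValue v

/-- `t` evaluates to some control-stuck term. -/
def EvalsToStuck (t : Tm) : Prop :=
  ∃ s, Relation.ReflTransGen Red t s ∧ ControlStuck s

/-- General contexts C ::= □ | λx.C | t C | C t | S k.C | ⟨C⟩. -/
inductive Ctx : Type
  | hole : Ctx
  | lam : ℕ → Ctx → Ctx
  | appL : Ctx → Tm → Ctx
  | appR : Tm → Ctx → Ctx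
  | shift : ℕ → Ctx → Ctx
  | reset : Ctx → Ctx

def Ctx.plug : Ctx → Tm → Tm
  | .hole, t => t
  | .lam x C, t => Tm.lam x (C.plug t)
  | .appL C u, t => Tm.app (C.plug t) u
  | .appR u C, t => Tm.app u (C.plug t)
  | .shift k C, t => Tm.shift k (C.plug t)
  | .reset C, t => Tm.reset (C.plug t)

def Ctx.fv : Ctx → Finset ℕ
  | .hole => ∅
  | .lam x C => C.fv \ {x}
  | .appL C u => C.fv ∪ u.fv
  | .appR u C => u.fv ∪ C.fv
  | .shift k C => C.fv \ {k}
  | .reset C => C.fv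

/-- Contextual equivalence ≈ for the relaxed semantics (on closed terms):
tests evaluation to values and evaluation to control-stuck terms in every
closed context. -/
def CtxEquiv (t0 t1 : Tm) : Prop :=
  ∀ C : Ctx, C.fv = ∅ →
    (EvalsToValue (C.plug t0) ↔ EvalsToValue (C.plug t1)) ∧
    (EvalsToStuck (C.plug t0) ↔ EvalsToStuck (C.plug t1))

/-- Contextual equivalence ≈_p for the original semantics: tests evaluation to
values of ⟨C[·]⟩ in every closed context C. -/
def CtxEquivP (t0 t1 : Tm) : Prop :=
  ∀ C : Ctx, C.fv = ∅ →
    (EvalsToValue (Tm.reset (C.plug t0)) ↔ EvalsToValue (Tm.reset (C.plug t1)))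

/-- Contextual equivalence ≈_E testing only with closed evaluation contexts. -/
def ECtxEquiv (t0 t1 : Tm) : Prop :=
  ∀ F : FCtx, F.fv = ∅ →
    (EvalsToValue (F.plug t0) ↔ EvalsToValue (F.plug t1)) ∧
    (EvalsToStuck (F.plug t0) ↔ EvalsToStuck (F.plug t1))

/-- Applicative simulation. -/
def IsAppSim (R : Tm → Tm → Prop) : Prop :=
  ∀ t0 t1, R t0 t1 →
    (∀ t0', Red t0 t0' →
      ∃ t1', Relation.ReflTransGen Red t1 t1' ∧ R t0' t1') ∧
    (∀ x t0', t0 = Tm.lam x t0' →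
      ∃ t1', Relation.ReflTransGen Red t1 (Tm.lam x t1') ∧
        ∀ v, IsValue v → Closed v → R (t0'.subst x v) (t1'.subst x v)) ∧
    (∀ (E0 : ECtx) (k : ℕ) (t0' : Tm), t0 = E0.plug (Tm.shift k t0') →
      ∃ (E1 : ECtx) (t1' : Tm),
        Relation.ReflTransGen Red t1 (E1.plug (Tm.shift k t1')) ∧
        ∀ E : ECtx, E.fv = ∅ →
          R (Tm.reset (t0'.subst k (contFun (E.comp E0))))
            (Tm.reset (t1'.subst k (contFun (E.comp E1)))))

/-- Applicative bisimulation. -/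
def IsAppBisim (R : Tm → Tm → Prop) : Prop :=
  IsAppSim R ∧ IsAppSim (fun a b => R b a)

/-- Applicative bisimilarity ≈_app: the largest applicative bisimulation. -/
def AppBisim (t0 t1 : Tm) : Prop := ∃ R, IsAppBisim R ∧ R t0 t1

/-- Simultaneous substitution (used only with closing substitutions mapping
variables to closed values, so no capture can occur). -/
def Tm.msubst : Tm → (ℕ → Tm) → Tm
  | .var x, σ => σ x
  | .lam x t, σ => Tm.lam x (t.msubst (Function.update σ x (Tm.var x)))
  | .app t u, σ => Tm.app (t.msubst σ) (u.msubst σ)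
  | .shift k t, σ => Tm.shift k (t.msubst (Function.update σ k (Tm.var k)))
  | .reset t, σ => Tm.reset (t.msubst σ)

/-- Open extension of a relation on closed terms: relate `t0σ` and `t1σ` for
every substitution σ mapping variables to closed values. -/
def OpenExt (R : Tm → Tm → Prop) (t0 t1 : Tm) : Prop :=
  ∀ σ : ℕ → Tm, (∀ x, IsValue (σ x) ∧ Closed (σ x)) →
    R (t0.msubst σ) (t1.msubst σ)

/-- ω := λx.x x. -/
def omegaTm : Tm := Tm.lam 0 (Tm.app (Tm.var 0) (Tm.var 0))

/-- Ω := ω ω, a diverging term. -/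
def OmegaTm : Tm := Tm.app omegaTm omegaTm


section Helpers

open Relation

theorem subst_lam_closed {v : Tm} (hv : Closed v) (y : ℕ) (t : Tm) (x : ℕ) :
    (Tm.lam y t).subst x v = if y = x then Tm.lam y t else Tm.lam y (t.subst x v) := by
  have : v.fv = ∅ := hv
  rw [Tm.subst]; simp [this]

theorem subst_shift_closed {v : Tm} (hv : Closed v) (y : ℕ) (t : Tm) (x : ℕ) :
    (Tm.shift y t).subst x v = if y = x then Tm.shift y t else Tm.shift y (t.subst x v) := by
  have : v.fv = ∅ := hv
  rw [Tm.subst]; simp [this]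

theorem subst_app (t u : Tm) (x : ℕ) (v : Tm) :
    (Tm.app t u).subst x v = Tm.app (t.subst x v) (u.subst x v) := by
  rw [Tm.subst]

theorem subst_reset (t : Tm) (x : ℕ) (v : Tm) :
    (Tm.reset t).subst x v = Tm.reset (t.subst x v) := by
  rw [Tm.subst]

theorem subst_var (w x : ℕ) (v : Tm) :
    (Tm.var w).subst x v = if w = x then v else Tm.var w := by
  rw [Tm.subst]

theorem fv_subst {v : Tm} (hv : Closed v) (t : Tm) (x : ℕ) :
    (t.subst x v).fv = t.fv \ {x} := by
  have hv' : v.fv = ∅ := hv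
  induction t with
  | var w =>
    rw [subst_var]; split
    · simp [Tm.fv, *]
    · ext a; simp [Tm.fv]; grind
  | lam y t ih =>
    rw [subst_lam_closed hv]; split
    · subst x; ext a; simp [Tm.fv]
    · ext a; simp [Tm.fv, ih]; grind
  | app t u iht ihu => rw [subst_app]; ext a; simp [Tm.fv, iht, ihu]; grind
  | shift y t ih =>
    rw [subst_shift_closed hv]; split
    · subst x; ext a; simp [Tm.fv]
    · ext a; simp [Tm.fv, ih]; grind
  | reset t ih => rw [subst_reset]; simp [Tm.fv, ih]

theorem subst_noop {v : Tm} (hv : Closed v) (t : Tm) (x : ℕ) (h : x ∉ t.fv) :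
    t.subst x v = t := by
  induction t with
  | var w => rw [subst_var]; simp [Tm.fv] at h; grind
  | lam y t ih =>
    rw [subst_lam_closed hv]; simp [Tm.fv] at h; split
    · rfl
    · rw [ih]; grind
  | app t u iht ihu => rw [subst_app]; simp [Tm.fv] at h; rw [iht h.1, ihu h.2]
  | shift y t ih =>
    rw [subst_shift_closed hv]; simp [Tm.fv] at h; split
    · rfl
    · rw [ih]; grind
  | reset t ih => rw [subst_reset, ih h]

theorem isValue_subst {w v : Tm} (hw : IsValue w) (hv : IsValue v) (hc : Closed v) (x : ℕ) :
    IsValue (w.subst x v) := by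
  cases hw with
  | var y => rw [subst_var]; split; exacts [hv, .var _]
  | lam y t => rw [subst_lam_closed hc]; split <;> exact .lam _ _

/-- Substitution of a closed value in a pure context. -/
def esubst (x : ℕ) (v : Tm) (hv : IsValue v) (hc : Closed v) : ECtx → ECtx
  | .hole => .hole
  | .appR w hw E => .appR (w.subst x v) (isValue_subst hw hv hc x) (esubst x v hv hc E)
  | .appL E u => .appL (esubst x v hv hc E) (u.subst x v)

theorem plug_subst (x : ℕ) (v : Tm) (hv : IsValue v) (hc : Closed v) (E : ECtx) (t : Tm) :
    (E.plug t).subst x v = (esubst x v hv hc E).plug (t.subst x v) := by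
  induction E with
  | hole => rfl
  | appR w hw E ih => simp [ECtx.plug, esubst, subst_app, ih]
  | appL E u ih => simp [ECtx.plug, esubst, subst_app, ih]

theorem esubst_fv (x : ℕ) (v : Tm) (hv : IsValue v) (hc : Closed v) (E : ECtx) :
    (esubst x v hv hc E).fv = E.fv \ {x} := by
  induction E with
  | hole => rfl
  | appR w hw E ih => simp only [ECtx.fv, esubst, ih, fv_subst hc]; grind
  | appL E u ih => simp only [ECtx.fv, esubst, ih, fv_subst hc]; grind

theorem esubst_noop (x : ℕ) (v : Tm) (hv : IsValue v) (hc : Closed v) (E : ECtx)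
    (h : x ∉ E.fv) : esubst x v hv hc E = E := by
  induction E with
  | hole => rfl
  | appR w hw E ih =>
    simp [ECtx.fv] at h
    simp [esubst, ih h.2, subst_noop hc w x h.1]
  | appL E u ih =>
    simp [ECtx.fv] at h
    simp [esubst, ih h.1, subst_noop hc u x h.2]

theorem plug_fv (E : ECtx) (t : Tm) : (E.plug t).fv = E.fv ∪ t.fv := by
  induction E with
  | hole => simp [ECtx.plug, ECtx.fv]
  | appR w hw E ih => simp [ECtx.plug, ECtx.fv, Tm.fv, ih]
  | appL E u ih => simp only [ECtx.plug, ECtx.fv, Tm.fv, ih]; grind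

theorem fplug_fv (F : FCtx) (t : Tm) : (F.plug t).fv = F.fv ∪ t.fv := by
  induction F with
  | hole => simp [FCtx.plug, FCtx.fv]
  | appR w hw E ih => simp [FCtx.plug, FCtx.fv, Tm.fv, ih]
  | appL E u ih => simp only [FCtx.plug, FCtx.fv, Tm.fv, ih]; grind
  | reset F ih => simp [FCtx.plug, FCtx.fv, Tm.fv, ih]

theorem comp_plug (E E' : ECtx) (t : Tm) : (E.comp E').plug t = E.plug (E'.plug t) := by
  induction E with
  | hole => rfl
  | appR w hw E ih => simp [ECtx.comp, ECtx.plug, ih]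
  | appL E u ih => simp [ECtx.comp, ECtx.plug, ih]

theorem comp_fv (E E' : ECtx) : (E.comp E').fv = E.fv ∪ E'.fv := by
  induction E with
  | hole => simp [ECtx.comp, ECtx.fv]
  | appR w hw E ih => simp [ECtx.comp, ECtx.fv, ih]
  | appL E u ih => simp only [ECtx.comp, ECtx.fv, ih]; grind

theorem contFun_closed {E : ECtx} (h : E.fv = ∅) : Closed (contFun E) := by
  simp [Closed, contFun, Tm.fv, plug_fv, h]

theorem closed_app {a b : Tm} : Closed (Tm.app a b) ↔ Closed a ∧ Closed b := by
  simp [Closed, Tm.fv, Finset.union_eq_empty]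

theorem closed_reset {a : Tm} : Closed (Tm.reset a) ↔ Closed a := by
  simp [Closed, Tm.fv]

theorem closed_plug {E : ECtx} {a : Tm} : Closed (E.plug a) ↔ E.fv = ∅ ∧ Closed a := by
  simp [Closed, plug_fv, Finset.union_eq_empty]

theorem closed_fplug {F : FCtx} {a : Tm} : Closed (F.plug a) ↔ F.fv = ∅ ∧ Closed a := by
  simp [Closed, fplug_fv, Finset.union_eq_empty]

theorem closed_lam_subst {x : ℕ} {t v : Tm} (h : Closed (Tm.lam x t)) (hv : Closed v) :
    Closed (t.subst x v) := by
  have h' : t.fv \ {x} = ∅ := h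
  rw [Closed, fv_subst hv, h']

theorem closed_shift_subst {x : ℕ} {t v : Tm} (h : Closed (Tm.shift x t)) (hv : Closed v) :
    Closed (t.subst x v) := by
  have h' : t.fv \ {x} = ∅ := h
  rw [Closed, fv_subst hv, h']

theorem closed_red {t t' : Tm} (h : Red t t') (hc : Closed t) : Closed t' := by
  cases h with
  | beta F x t v hv =>
    rw [closed_fplug, closed_app] at hc
    rw [closed_fplug]
    exact ⟨hc.1, closed_lam_subst hc.2.1 hc.2.2⟩
  | capture F E k t =>
    rw [closed_fplug, closed_reset, closed_plug] at hc
    rw [closed_fplug, closed_reset]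
    exact ⟨hc.1, closed_shift_subst hc.2.2 (contFun_closed hc.2.1)⟩
  | resetVal F v hv =>
    rw [closed_fplug, closed_reset] at hc
    rwa [closed_fplug]

theorem closed_reds {t t' : Tm} (h : ReflTransGen Red t t') (hc : Closed t) : Closed t' := by
  induction h with
  | refl => exact hc
  | tail _ h ih => exact closed_red h ih

theorem red_appL {a a' : Tm} (h : Red a a') (b : Tm) : Red (.app a b) (.app a' b) := by
  cases h with
  | beta F x t v hv => exact Red.beta (.appL F b) x t v hv
  | capture F E k t => exact Red.capture (.appL F b) E k t
  | resetVal F v hv => exact Red.resetVal (.appL F b) v hv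

theorem red_appR {a a' : Tm} (h : Red a a') {b : Tm} (hb : IsValue b) :
    Red (.app b a) (.app b a') := by
  cases h with
  | beta F x t v hv => exact Red.beta (.appR b hb F) x t v hv
  | capture F E k t => exact Red.capture (.appR b hb F) E k t
  | resetVal F v hv => exact Red.resetVal (.appR b hb F) v hv

theorem red_reset {a a' : Tm} (h : Red a a') : Red (.reset a) (.reset a') := by
  cases h with
  | beta F x t v hv => exact Red.beta (.reset F) x t v hv
  | capture F E k t => exact Red.capture (.reset F) E k t
  | resetVal F v hv => exact Red.resetVal (.reset F) v hv

theorem reds_appL {a a' : Tm} (h : ReflTransGen Red a a') (b : Tm) :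
    ReflTransGen Red (.app a b) (.app a' b) :=
  ReflTransGen.lift (fun a => Tm.app a b) (fun _ _ h => red_appL h b) _ _ h

theorem reds_appR {a a' : Tm} (h : ReflTransGen Red a a') {b : Tm} (hb : IsValue b) :
    ReflTransGen Red (.app b a) (.app b a') :=
  ReflTransGen.lift (fun a => Tm.app b a) (fun _ _ h => red_appR h hb) _ _ h

theorem reds_reset {a a' : Tm} (h : ReflTransGen Red a a') :
    ReflTransGen Red (.reset a) (.reset a') :=
  ReflTransGen.lift (fun a => Tm.reset a) (fun _ _ h => red_reset h) _ _ h

theorem reds_plug {a a' : Tm} (h : ReflTransGen Red a a') (E : ECtx) :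
    ReflTransGen Red (E.plug a) (E.plug a') := by
  induction E with
  | hole => exact h
  | appR w hw E ih => exact reds_appR ih hw
  | appL E u ih => exact reds_appL ih u

/-- Root reductions. -/
inductive Head : Tm → Tm → Prop
  | beta (x : ℕ) (t v : Tm) : IsValue v → Head (.app (.lam x t) v) (t.subst x v)
  | capture (E : ECtx) (k : ℕ) (t : Tm) :
      Head (.reset (E.plug (.shift k t))) (.reset (t.subst k (contFun E)))
  | resetVal (v : Tm) : IsValue v → Head (.reset v) v

theorem red_iff {t t' : Tm} :
    Red t t' ↔ ∃ (F : FCtx) (r r' : Tm), Head r r' ∧ t = F.plug r ∧ t' = F.plug r' := by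
  constructor
  · intro h
    cases h with
    | beta F x t v hv => exact ⟨F, _, _, .beta x t v hv, rfl, rfl⟩
    | capture F E k t => exact ⟨F, _, _, .capture E k t, rfl, rfl⟩
    | resetVal F v hv => exact ⟨F, _, _, .resetVal v hv, rfl, rfl⟩
  · rintro ⟨F, r, r', h, rfl, rfl⟩
    cases h with
    | beta x t v hv => exact .beta F x t v hv
    | capture E k t => exact .capture F E k t
    | resetVal _ hv => exact .resetVal F _ hv

theorem red_app_inv {a b r : Tm} (h : Red (.app a b) r) :
    (∃ a', Red a a' ∧ r = .app a' b) ∨ (IsValue a ∧ ∃ b', Red b b' ∧ r = .app a b') ∨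
    (∃ x t, a = .lam x t ∧ IsValue b ∧ r = t.subst x b) := by
  obtain ⟨F, p, p', hh, e, rfl⟩ := red_iff.1 h
  cases F with
  | hole =>
    simp only [FCtx.plug] at e ⊢
    subst e
    cases hh with
    | beta x t _ hv => exact .inr (.inr ⟨x, t, rfl, hv, rfl⟩)
  | appR v hv F =>
    simp only [FCtx.plug, Tm.app.injEq] at e
    obtain ⟨rfl, rfl⟩ := e
    exact .inr (.inl ⟨hv, _, red_iff.2 ⟨F, p, p', hh, rfl, rfl⟩, rfl⟩)
  | appL F u =>
    simp only [FCtx.plug, Tm.app.injEq] at e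
    obtain ⟨rfl, rfl⟩ := e
    exact .inl ⟨_, red_iff.2 ⟨F, p, p', hh, rfl, rfl⟩, rfl⟩
  | reset F => simp [FCtx.plug] at e

theorem red_reset_inv {a r : Tm} (h : Red (.reset a) r) :
    (∃ a', Red a a' ∧ r = .reset a') ∨
    (∃ E k t, a = ECtx.plug E (.shift k t) ∧ r = .reset (t.subst k (contFun E))) ∨
    (IsValue a ∧ r = a) := by
  obtain ⟨F, p, p', hh, e, rfl⟩ := red_iff.1 h
  cases F with
  | hole =>
    simp only [FCtx.plug] at e ⊢
    subst e
    cases hh with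
    | capture E k t => exact .inr (.inl ⟨E, k, t, rfl, rfl⟩)
    | resetVal v hv => exact .inr (.inr ⟨hv, rfl⟩)
  | appR v hv F => simp [FCtx.plug] at e
  | appL F u => simp [FCtx.plug] at e
  | reset F =>
    simp only [FCtx.plug, Tm.reset.injEq] at e
    subst e
    exact .inl ⟨_, red_iff.2 ⟨F, p, p', hh, rfl, rfl⟩, rfl⟩

theorem not_red_value {a r : Tm} (hv : IsValue a) : ¬ Red a r := by
  intro h
  obtain ⟨F, p, p', hh, e, rfl⟩ := red_iff.1 h
  cases hv <;> cases F <;> simp [FCtx.plug] at e <;> subst e <;> cases hh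

theorem not_red_shift {k : ℕ} {a r : Tm} : ¬ Red (.shift k a) r := by
  intro h
  obtain ⟨F, p, p', hh, e, rfl⟩ := red_iff.1 h
  cases F <;> simp [FCtx.plug] at e
  subst e
  cases hh

theorem not_value_app {a b : Tm} : ¬ IsValue (.app a b) := by intro h; cases h

theorem value_plug {E : ECtx} {a : Tm} (h : IsValue (E.plug a)) : E = .hole ∧ IsValue a := by
  cases E with
  | hole => exact ⟨rfl, h⟩
  | appR => exact absurd h not_value_app
  | appL => exact absurd h not_value_app

theorem not_value_stuck {E : ECtx} {k : ℕ} {a : Tm} : ¬ IsValue (E.plug (.shift k a)) := by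
  intro h
  cases (value_plug h).2

theorem red_plug_inv {u : Tm} (hu : ¬ IsValue u) (E : ECtx) {r : Tm} (h : Red (E.plug u) r) :
    ∃ u', Red u u' ∧ r = E.plug u' := by
  induction E generalizing r with
  | hole => exact ⟨r, h, rfl⟩
  | appR w hw E ih =>
    rcases red_app_inv h with ⟨a', ha, rfl⟩ | ⟨_, b', hb, rfl⟩ | ⟨x, t, rfl, hb, rfl⟩
    · exact absurd ha (not_red_value hw)
    · obtain ⟨u', h1, rfl⟩ := ih hb
      exact ⟨u', h1, rfl⟩
    · exact absurd (value_plug hb).2 hu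
  | appL E b ih =>
    rcases red_app_inv h with ⟨a', ha, rfl⟩ | ⟨hw, b', hb, rfl⟩ | ⟨x, t, e, hb, rfl⟩
    · obtain ⟨u', h1, rfl⟩ := ih ha
      exact ⟨u', h1, rfl⟩
    · exact absurd (value_plug hw).2 hu
    · exact absurd (value_plug (e ▸ IsValue.lam x t : IsValue (E.plug u))).2 hu

theorem app_stuck_inv {a b : Tm} {E : ECtx} {k : ℕ} {s : Tm}
    (h : Tm.app a b = E.plug (.shift k s)) :
    (∃ F, E = .appL F b ∧ a = F.plug (.shift k s)) ∨
    (∃ hv F, E = .appR a hv F ∧ b = F.plug (.shift k s)) := by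
  cases E with
  | hole => simp [ECtx.plug] at h
  | appR v hv F =>
    simp only [ECtx.plug, Tm.app.injEq] at h
    obtain ⟨rfl, rfl⟩ := h
    exact .inr ⟨hv, F, rfl, rfl⟩
  | appL F u =>
    simp only [ECtx.plug, Tm.app.injEq] at h
    obtain ⟨rfl, rfl⟩ := h
    exact .inl ⟨F, rfl, rfl⟩

theorem stuck_plug_inv {u : Tm} (hu : ¬ IsValue u) (E : ECtx) {E1 : ECtx} {k : ℕ} {s : Tm}
    (h : E.plug u = E1.plug (.shift k s)) :
    ∃ F, u = ECtx.plug F (.shift k s) ∧ E1 = E.comp F := by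
  induction E generalizing E1 with
  | hole => exact ⟨E1, h, rfl⟩
  | appR w hw E ih =>
    rcases app_stuck_inv h with ⟨F, rfl, e⟩ | ⟨hv, F, rfl, e⟩
    · exact absurd (e ▸ hw) not_value_stuck
    · obtain ⟨G, h1, rfl⟩ := ih e
      exact ⟨G, h1, rfl⟩
  | appL E b ih =>
    rcases app_stuck_inv h with ⟨F, rfl, e⟩ | ⟨hv, F, rfl, e⟩
    · obtain ⟨G, h1, rfl⟩ := ih e
      exact ⟨G, h1, rfl⟩
    · exact absurd (value_plug hv).2 hu

mutual
/-- The candidate relation: compatible closure of β_Ω. -/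
inductive P : Tm → Tm → Prop
  | var (x : ℕ) : P (.var x) (.var x)
  | lam (x : ℕ) {t t' : Tm} : P t t' → P (.lam x t) (.lam x t')
  | app {a a' b b' : Tm} : P a a' → P b b' → P (.app a b) (.app a' b')
  | shift (k : ℕ) {t t' : Tm} : P t t' → P (.shift k t) (.shift k t')
  | reset {t t' : Tm} : P t t' → P (.reset t) (.reset t')
  | beta {E E' : ECtx} (x : ℕ) {u u' : Tm} : PC E E' → P u u' → x ∉ E.fv →
      P (.app (.lam x (E.plug (.var x))) u) (E'.plug u')
inductive PC : ECtx → ECtx → Prop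
  | hole : PC .hole .hole
  | appR {v v' : Tm} (hv : IsValue v) (hv' : IsValue v') {E E' : ECtx} :
      P v v' → PC E E' → PC (.appR v hv E) (.appR v' hv' E')
  | appL {E E' : ECtx} {u u' : Tm} : PC E E' → P u u' → PC (.appL E u) (.appL E' u')
end

theorem P.refl (t : Tm) : P t t := by
  induction t with
  | var x => exact .var x
  | lam x t ih => exact .lam x ih
  | app t u iht ihu => exact .app iht ihu
  | shift x t ih => exact .shift x ih
  | reset t ih => exact .reset ih

theorem PC.refl (E : ECtx) : PC E E := by
  induction E with
  | hole => exact .hole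
  | appR v hv E ih => exact .appR hv hv (P.refl v) ih
  | appL E u ih => exact .appL ih (P.refl u)

theorem PC.plug {E E' : ECtx} (h : PC E E') {u u' : Tm} (hu : P u u') :
    P (E.plug u) (E'.plug u') := by
  induction E generalizing E' with
  | hole => cases h; exact hu
  | appR v hv E ih => cases h with | appR _ hv' h1 h2 => exact .app h1 (ih h2)
  | appL E b ih => cases h with | appL h1 h2 => exact .app (ih h1) h2

theorem P.fv_eq {t t' : Tm} (h : P t t') : t.fv = t'.fv := by
  refine P.rec (motive_1 := fun t t' _ => t.fv = t'.fv)
    (motive_2 := fun E E' _ => E.fv = E'.fv) ?_ ?_ ?_ ?_ ?_ ?_ ?_ ?_ ?_ h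
  · intro x; rfl
  · intro x t t' _ ih; simp [Tm.fv, ih]
  · intro a a' b b' _ _ ih1 ih2; simp [Tm.fv, ih1, ih2]
  · intro x t t' _ ih; simp [Tm.fv, ih]
  · intro t t' _ ih; simp [Tm.fv, ih]
  · intro E E' x u u' _ _ hx ih1 ih2
    simp only [Tm.fv, plug_fv, ih2, ← ih1]; grind
  · rfl
  · intro v v' _ _ E E' _ _ ih1 ih2; simp [ECtx.fv, ih1, ih2]
  · intro E E' u u' _ _ ih1 ih2; simp [ECtx.fv, ih1, ih2]

theorem P.closed {t t' : Tm} (h : P t t') : Closed t ↔ Closed t' := by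
  rw [Closed, Closed, h.fv_eq]

theorem P.subst {t t' : Tm} (h : P t t') (y : ℕ) {v v' : Tm} (hv : IsValue v) (hv' : IsValue v')
    (hc : Closed v) (hP : P v v') : P (t.subst y v) (t'.subst y v') := by
  have hc' : Closed v' := hP.closed.1 hc
  refine P.rec (motive_1 := fun t t' _ => P (t.subst y v) (t'.subst y v'))
    (motive_2 := fun E E' _ => PC (esubst y v hv hc E) (esubst y v' hv' hc' E'))
    ?_ ?_ ?_ ?_ ?_ ?_ ?_ ?_ ?_ h
  · intro x; rw [subst_var, subst_var]; split; exacts [hP, .var x]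
  · intro x t t' h ih; rw [subst_lam_closed hc, subst_lam_closed hc']; split
    exacts [.lam x h, .lam x ih]
  · intro a a' b b' _ _ ih1 ih2; rw [subst_app, subst_app]; exact .app ih1 ih2
  · intro x t t' h ih; rw [subst_shift_closed hc, subst_shift_closed hc']; split
    exacts [.shift x h, .shift x ih]
  · intro t t' _ ih; rw [subst_reset, subst_reset]; exact .reset ih
  · intro E E' x u u' _ _ hx ih1 ih2
    have e : (Tm.lam x (E.plug (.var x))).subst y v
        = .lam x ((esubst y v hv hc E).plug (.var x)) := by
      rw [subst_lam_closed hc]; split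
      · subst y; rw [esubst_noop _ _ _ _ _ hx]
      · rw [plug_subst y v hv hc, subst_var, if_neg (by assumption)]
    rw [subst_app, e, plug_subst y v' hv' hc']
    refine .beta x ih1 ih2 ?_
    rw [esubst_fv]; simp [hx]
  · exact .hole
  · intro w w' _ _ E E' _ _ ih1 ih2; exact .appR _ _ ih1 ih2
  · intro E E' u u' _ _ ih1 ih2; exact .appL ih1 ih2

/-- Semantic relatedness of contexts. -/
def SC (E E' : ECtx) : Prop := ∀ u u', P u u' → P (E.plug u) (E'.plug u')

theorem fresh_empty : fresh ∅ = 0 := by simp [fresh]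

theorem SC.contFun {E E' : ECtx} (h : SC E E') (hE : E.fv = ∅) (hE' : E'.fv = ∅) :
    P (contFun E) (contFun E') := by
  rw [LambdaS.contFun, LambdaS.contFun, hE, hE', fresh_empty]
  exact .lam _ (.reset (h _ _ (.var 0)))

theorem SC.comp {E0 E1 : ECtx} (h : SC E0 E1) (E : ECtx) : SC (E.comp E0) (E.comp E1) := by
  intro u u' hu
  rw [comp_plug, comp_plug]
  exact (PC.refl E).plug (h u u' hu)

theorem P.value {t t' : Tm} (h : P t t') (hv : IsValue t) : IsValue t' := by
  cases hv <;> cases h <;> constructor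

theorem P.stuck {E0 : ECtx} {k : ℕ} {s0 t1 : Tm} (h : P (E0.plug (.shift k s0)) t1) :
    ∃ E1 s1, t1 = ECtx.plug E1 (.shift k s1) ∧ P s0 s1 ∧ SC E0 E1 := by
  induction E0 generalizing t1 with
  | hole =>
    cases h with
    | shift _ h => exact ⟨.hole, _, rfl, h, fun _ _ h => h⟩
  | appR v hv E ih =>
    generalize e : (ECtx.appR v hv E).plug (.shift k s0) = t0 at h
    simp only [ECtx.plug] at e
    cases h with
    | var | lam | shift | reset => simp at e
    | app ha hb =>
      simp only [Tm.app.injEq] at e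
      obtain ⟨rfl, rfl⟩ := e
      obtain ⟨E1, s1, rfl, h1, h2⟩ := ih hb
      exact ⟨.appR _ (ha.value hv) E1, s1, rfl, h1, fun u u' hu => .app ha (h2 u u' hu)⟩
    | @beta G G' x u u' hG hu hx =>
      simp only [Tm.app.injEq] at e
      obtain ⟨rfl, rfl⟩ := e
      obtain ⟨E1, s1, rfl, h1, h2⟩ := ih hu
      refine ⟨G'.comp E1, s1, (comp_plug _ _ _).symm, h1, fun u u' hu => ?_⟩
      rw [comp_plug]
      exact .beta x hG (h2 u u' hu) hx
  | appL E b ih =>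
    generalize e : (ECtx.appL E b).plug (.shift k s0) = t0 at h
    simp only [ECtx.plug] at e
    cases h with
    | var | lam | shift | reset => simp at e
    | app ha hb =>
      simp only [Tm.app.injEq] at e
      obtain ⟨rfl, rfl⟩ := e
      obtain ⟨E1, s1, rfl, h1, h2⟩ := ih ha
      exact ⟨.appL E1 _, s1, rfl, h1, fun u u' hu => .app (h2 u u' hu) hb⟩
    | @beta G G' x u u' hG hu hx =>
      simp only [Tm.app.injEq] at e
      exact absurd (e.1 ▸ IsValue.lam _ _) not_value_stuck

/-- Capture steps preserve the relation. -/
theorem P.capture {E0 E1 : ECtx} {k : ℕ} {s0 s1 : Tm} (hs : P s0 s1) (h : SC E0 E1)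
    (hE0 : E0.fv = ∅) (hE1 : E1.fv = ∅) :
    P (.reset (s0.subst k (contFun E0))) (.reset (s1.subst k (contFun E1))) :=
  .reset (hs.subst k (.lam _ _) (.lam _ _) (contFun_closed hE0) (h.contFun hE0 hE1))

theorem beta_step {E : ECtx} {x : ℕ} (hx : x ∉ E.fv) {v : Tm} (hv : IsValue v) (hc : Closed v) :
    (E.plug (.var x)).subst x v = E.plug v := by
  rw [plug_subst x v hv hc, esubst_noop _ _ _ _ _ hx, subst_var, if_pos rfl]

theorem P.lam_inv {x : ℕ} {s t : Tm} (h : P (.lam x s) t) : ∃ s', t = .lam x s' ∧ P s s' := by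
  cases h with
  | lam _ h => exact ⟨_, rfl, h⟩

theorem P.lam_inv' {x : ℕ} {s t : Tm} (h : P t (.lam x s)) (hv : IsValue t) :
    ∃ s', t = .lam x s' ∧ P s' s := by
  generalize e : Tm.lam x s = t1 at h
  cases h with
  | lam _ h => cases e; exact ⟨_, rfl, h⟩
  | beta => exact absurd hv not_value_app
  | _ => simp at e

theorem P.fwd {t0 t1 : Tm} (h : P t0 t1) (hc : Closed t0) {r : Tm} (hr : Red t0 r) :
    ∃ r', ReflTransGen Red t1 r' ∧ P r r' := by
  revert hc r
  refine P.rec (motive_1 := fun t0 t1 _ => Closed t0 → ∀ {r : Tm}, Red t0 r →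
    ∃ r', ReflTransGen Red t1 r' ∧ P r r')
    (motive_2 := fun _ _ _ => True) ?_ ?_ ?_ ?_ ?_ ?_ ?_ ?_ ?_ h
  · intro x _ r hr; exact absurd hr (not_red_value (.var _))
  · intro x t t' _ _ _ r hr; exact absurd hr (not_red_value (.lam _ _))
  · intro a a' b b' ha hb iha ihb hc r hr
    rw [closed_app] at hc
    rcases red_app_inv hr with ⟨c, h1, rfl⟩ | ⟨hv, c, h1, rfl⟩ | ⟨x, t, rfl, hv, rfl⟩
    · obtain ⟨r', h2, h3⟩ := iha hc.1 h1
      exact ⟨_, reds_appL h2 _, .app h3 hb⟩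
    · obtain ⟨r', h2, h3⟩ := ihb hc.2 h1
      exact ⟨_, reds_appR h2 (ha.value hv), .app ha h3⟩
    · obtain ⟨t', rfl, ht⟩ := ha.lam_inv
      exact ⟨_, .single (Red.beta .hole x t' b' (hb.value hv)),
        ht.subst x hv (hb.value hv) hc.2 hb⟩
  · intro k t t' _ _ _ r hr; exact absurd hr not_red_shift
  · intro t t' h ih hc r hr
    rw [closed_reset] at hc
    rcases red_reset_inv hr with ⟨c, h1, rfl⟩ | ⟨E, k, s, rfl, rfl⟩ | ⟨hv, rfl⟩
    · obtain ⟨r', h2, h3⟩ := ih hc h1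
      exact ⟨_, reds_reset h2, .reset h3⟩
    · obtain ⟨E1, s1, rfl, h1, h2⟩ := h.stuck
      exact ⟨_, .single (Red.capture .hole E1 k s1),
        P.capture h1 h2 (closed_plug.1 hc).1 (closed_plug.1 (h.closed.1 hc)).1⟩
    · exact ⟨_, .single (Red.resetVal .hole _ (h.value hv)), h⟩
  · intro E E' x u u' hE hu hx _ ihu hc r hr
    rw [closed_app] at hc
    rcases red_app_inv hr with ⟨c, h1, rfl⟩ | ⟨hv, c, h1, rfl⟩ | ⟨y, t, e, hv, rfl⟩
    · exact absurd h1 (not_red_value (.lam _ _))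
    · obtain ⟨r', h2, h3⟩ := ihu hc.2 h1
      exact ⟨_, reds_plug h2 E', .beta x hE h3 hx⟩
    · simp only [Tm.lam.injEq] at e
      obtain ⟨rfl, rfl⟩ := e
      rw [beta_step hx hv hc.2]
      exact ⟨_, .refl, hE.plug hu⟩
  · trivial
  · intros; trivial
  · intros; trivial

/-- The clauses of the backward simulation. -/
def Back (t0 t1 : Tm) : Prop := Closed t0 →
  (IsValue t1 → ∃ v, ReflTransGen Red t0 v ∧ IsValue v ∧ P v t1) ∧
  (∀ E1 k s1, t1 = ECtx.plug E1 (.shift k s1) → ∃ E0 s0,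
    ReflTransGen Red t0 (ECtx.plug E0 (.shift k s0)) ∧ P s0 s1 ∧ SC E0 E1) ∧
  (∀ r, Red t1 r → ∃ r', ReflTransGen Red t0 r' ∧ P r' r)

theorem Back.of_value {v v' : Tm} (hv : IsValue v) (hv' : IsValue v') (h : P v v') :
    Back v v' := by
  intro _
  refine ⟨fun _ => ⟨v, .refl, hv, h⟩, ?_, ?_⟩
  · rintro E k s rfl; exact absurd hv' not_value_stuck
  · intro r hr; exact absurd hr (not_red_value hv')

theorem Back.of_reds {t0 t0' t1 : Tm} (h : ReflTransGen Red t0 t0') (hb : Back t0' t1) :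
    Back t0 t1 := by
  intro hc
  obtain ⟨h1, h2, h3⟩ := hb (closed_reds h hc)
  refine ⟨fun hv => ?_, fun E k s e => ?_, fun r hr => ?_⟩
  · obtain ⟨v, a, b⟩ := h1 hv; exact ⟨v, h.trans a, b⟩
  · obtain ⟨E0, s0, a, b⟩ := h2 E k s e; exact ⟨E0, s0, h.trans a, b⟩
  · obtain ⟨v, a, b⟩ := h3 r hr; exact ⟨v, h.trans a, b⟩

theorem Back.app {a a' b b' : Tm} (ha : P a a') (hb : P b b') (iha : Back a a')
    (ihb : Back b b') : Back (.app a b) (.app a' b') := by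
  intro hc
  rw [closed_app] at hc
  obtain ⟨a1, a2, a3⟩ := iha hc.1
  obtain ⟨b1, b2, b3⟩ := ihb hc.2
  refine ⟨fun hv => absurd hv not_value_app, fun E k s e => ?_, fun r hr => ?_⟩
  · rcases app_stuck_inv e with ⟨F, rfl, e2⟩ | ⟨hv, F, rfl, e2⟩
    · obtain ⟨E0, s0, h1, h2, h3⟩ := a2 _ _ _ e2
      exact ⟨.appL E0 b, s0, reds_appL h1 b, h2, fun u u' hu => .app (h3 u u' hu) hb⟩
    · obtain ⟨v, h4, h5, h6⟩ := a1 hv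
      obtain ⟨E0, s0, h1, h2, h3⟩ := b2 _ _ _ e2
      exact ⟨.appR v h5 E0, s0, (reds_appL h4 b).trans (reds_appR h1 h5), h2,
        fun u u' hu => .app h6 (h3 u u' hu)⟩
  · rcases red_app_inv hr with ⟨c, h1, rfl⟩ | ⟨hv, c, h1, rfl⟩ | ⟨x, t, rfl, hv, rfl⟩
    · obtain ⟨r', h2, h3⟩ := a3 _ h1
      exact ⟨_, reds_appL h2 _, .app h3 hb⟩
    · obtain ⟨v, h4, h5, h6⟩ := a1 hv
      obtain ⟨r', h2, h3⟩ := b3 _ h1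
      exact ⟨_, (reds_appL h4 b).trans (reds_appR h2 h5), .app h6 h3⟩
    · obtain ⟨v, h4, h5, h6⟩ := a1 (.lam _ _)
      obtain ⟨w, h7, h8, h9⟩ := b1 hv
      obtain ⟨s, rfl, hs⟩ := h6.lam_inv' h5
      exact ⟨_, ((reds_appL h4 b).trans (reds_appR h7 h5)).tail (Red.beta .hole x s w h8),
        hs.subst x h8 hv (closed_reds h7 hc.2) h9⟩

theorem P.back {t0 t1 : Tm} (h : P t0 t1) : Back t0 t1 := by
  refine P.rec (motive_1 := fun t0 t1 _ => Back t0 t1)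
    (motive_2 := fun E E' _ => ∀ u u', P u u' → Back u u' → Back (E.plug u) (E'.plug u'))
    ?_ ?_ ?_ ?_ ?_ ?_ ?_ ?_ ?_ h
  · intro x; exact .of_value (.var x) (.var x) (.var x)
  · intro x t t' h _; exact .of_value (.lam x _) (.lam x _) (.lam x h)
  · intro a a' b b' ha hb iha ihb; exact .app ha hb iha ihb
  · intro k t t' h _ hc
    refine ⟨fun hv => (by cases hv), fun E j s e => ?_, fun r hr => absurd hr not_red_shift⟩
    cases E <;> simp [ECtx.plug] at e
    obtain ⟨rfl, rfl⟩ := e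
    exact ⟨.hole, t, .refl, h, fun _ _ h => h⟩
  · intro t t' h ih hc
    rw [closed_reset] at hc
    obtain ⟨a1, a2, a3⟩ := ih hc
    refine ⟨fun hv => (by cases hv), fun E j s e => ?_, fun r hr => ?_⟩
    · cases E <;> simp [ECtx.plug] at e
    · rcases red_reset_inv hr with ⟨c, h1, rfl⟩ | ⟨E, k, s, rfl, rfl⟩ | ⟨hv, rfl⟩
      · obtain ⟨r', h2, h3⟩ := a3 _ h1
        exact ⟨_, reds_reset h2, .reset h3⟩
      · obtain ⟨E0, s0, h1, h2, h3⟩ := a2 _ _ _ rfl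
        exact ⟨_, (reds_reset h1).tail (Red.capture .hole E0 k s0),
          P.capture h2 h3 (closed_plug.1 (closed_reds h1 hc)).1
            (closed_plug.1 (h.closed.1 hc)).1⟩
      · obtain ⟨v, h4, h5, h6⟩ := a1 hv
        exact ⟨_, (reds_reset h4).tail (Red.resetVal .hole v h5), h6⟩
  · intro E E' x u u' hE hu hx ihE ihu hc
    have hc' := closed_app.1 hc
    obtain ⟨a1, a2, a3⟩ := ihu hc'.2
    by_cases hv : IsValue u'
    · obtain ⟨v, h4, h5, h6⟩ := a1 hv
      have hr : ReflTransGen Red (.app (.lam x (E.plug (.var x))) u) (E.plug v) := by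
        refine (reds_appR h4 (.lam _ _)).tail ?_
        rw [← beta_step hx h5 (closed_reds h4 hc'.2)]
        exact Red.beta .hole _ _ _ h5
      exact Back.of_reds hr (ihE v u' h6 (.of_value h5 hv h6)) hc
    · refine ⟨fun h => absurd (value_plug h).2 hv, fun E1 k s e => ?_, fun r hr => ?_⟩
      · obtain ⟨F, rfl, rfl⟩ := stuck_plug_inv hv E' e
        obtain ⟨E0, s0, h1, h2, h3⟩ := a2 _ _ _ rfl
        refine ⟨.appR _ (.lam _ _) E0, s0, reds_appR h1 (.lam _ _), h2, fun w w' hw => ?_⟩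
        rw [comp_plug]
        exact .beta x hE (h3 w w' hw) hx
      · obtain ⟨w, h1, rfl⟩ := red_plug_inv hv E' hr
        obtain ⟨r', h2, h3⟩ := a3 _ h1
        exact ⟨_, reds_appR h2 (.lam _ _), .beta x hE h3 hx⟩
  · intro u u' _ h; exact h
  · intro v v' hv hv' E E' hP hE ih1 ih2 u u' hu hb
    exact .app hP (hE.plug hu) ih1 (ih2 u u' hu hb)
  · intro E E' b b' hE hP ih1 ih2 u u' hu hb
    exact .app (hE.plug hu) hP (ih1 u u' hu hb) ih2

/-- The bisimulation. -/
def BR (t0 t1 : Tm) : Prop := Closed t0 ∧ P t0 t1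

theorem BR.stuck {E0 E1 : ECtx} {k : ℕ} {s0 s1 : Tm} (hs : P s0 s1) (h : SC E0 E1)
    (hc0 : Closed (E0.plug (.shift k s0))) (hc1 : Closed (E1.plug (.shift k s1)))
    (E : ECtx) (hE : E.fv = ∅) :
    BR (.reset (s0.subst k (contFun (E.comp E0)))) (.reset (s1.subst k (contFun (E.comp E1)))) := by
  rw [closed_plug] at hc0 hc1
  have e0 : (E.comp E0).fv = ∅ := by rw [comp_fv, hE, hc0.1]; rfl
  have e1 : (E.comp E1).fv = ∅ := by rw [comp_fv, hE, hc1.1]; rfl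
  exact ⟨closed_reset.2 (closed_shift_subst hc0.2 (contFun_closed e0)),
    P.capture hs (h.comp E) e0 e1⟩

theorem BR.bisim : IsAppBisim BR := by
  constructor
  · rintro t0 t1 ⟨hc, h⟩
    refine ⟨fun r hr => ?_, ?_, ?_⟩
    · obtain ⟨r', h1, h2⟩ := h.fwd hc hr
      exact ⟨r', h1, closed_red hr hc, h2⟩
    · rintro x s rfl
      obtain ⟨s', rfl, hs⟩ := h.lam_inv
      exact ⟨s', .refl, fun v hv hvc =>
        ⟨closed_lam_subst hc hvc, hs.subst x hv hv hvc (P.refl v)⟩⟩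
    · rintro E0 k s0 rfl
      obtain ⟨E1, s1, rfl, h1, h2⟩ := h.stuck
      exact ⟨E1, s1, .refl, BR.stuck h1 h2 hc (h.closed.1 hc)⟩
  · rintro t1 t0 ⟨hc, h⟩
    obtain ⟨a1, a2, a3⟩ := h.back hc
    refine ⟨fun r hr => ?_, ?_, ?_⟩
    · obtain ⟨r', h1, h2⟩ := a3 r hr
      exact ⟨r', h1, closed_reds h1 hc, h2⟩
    · rintro x s rfl
      obtain ⟨v, h4, h5, h6⟩ := a1 (.lam _ _)
      obtain ⟨s', rfl, hs⟩ := h6.lam_inv' h5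
      exact ⟨s', h4, fun v hv hvc =>
        ⟨closed_lam_subst (closed_reds h4 hc) hvc, hs.subst x hv hv hvc (P.refl v)⟩⟩
    · rintro E1 k s1 rfl
      obtain ⟨E0, s0, h1, h2, h3⟩ := a2 _ _ _ rfl
      exact ⟨E0, s0, h1, BR.stuck h2 h3 (closed_reds h1 hc) (h.closed.1 hc)⟩

end Helpers

/-- The β_Ω axiom is validated by applicative bisimilarity:
for a pure context `E` with `x ∉ fv E` and a term `t` such that both sides are
closed, `(λx.E[x]) t ≈_app E[t]`. -/
theorem beta_omega_appBisim (E : ECtx) (x : ℕ) (hx : x ∉ E.fv) (t : Tm)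
    (h0 : Closed (Tm.app (Tm.lam x (E.plug (Tm.var x))) t))
    (h1 : Closed (E.plug t)) :
    AppBisim (Tm.app (Tm.lam x (E.plug (Tm.var x))) t) (E.plug t) := by
  exact ⟨BR, BR.bisim, h0, .beta x (PC.refl E) (P.refl t) hx⟩

end LambdaS
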